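/- arXiv:1204.6160 — 3 statements merged into one kernel-verified Lean document; each statement's English description precedes it below -/
import Mathlib

section
/- Let K : ℝ^d → ℝ be a probability density with K(−x) = K(x) for all x, with finite absolute moments up to order 3, and with ∫_{ℝ^d} x x^⊤ K(x) dx = m₂ I_d for some m₂ ∈ ℝ. Let K̃ = K*K − 2K. Then: (i) ∫ K̃(x) dx = −1; (ii) ∫ x_i K̃(x) dx = 0 for every i; (iii) ∫ x_i x_j K̃(x) dx = 0 for all i, j; (iv) ∫ x_i x_j x_k K̃(x) dx = 0 for all i, j, k. -/
/-!
The odd moments vanish by parity: `K * K` is even, hence so is `K̃ = K * K - 2K`, and a monomial of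
odd degree times an even function is odd, so its integral is zero.

For the moments of order 0 and 2, write `x = (x - y) + y` inside the convolution. By Fubini
(`integrable_convIntegrand`, `integral_convIntegrand`), `∬ f (x - y) g y dy dx = (∫ f) (∫ g)`.
Thus `∫ K * K = 1`, and expanding `x i * x j` gives
`∫ x i x j (K * K) = 2 (∫ x i x j K) (∫ K) + 2 (∫ x i K) (∫ x j K) = 2 ∫ x i x j K`,
as the first moments of `K` are zero.
-/

open MeasureTheory

section

variable {d : ℕ}

lemma integral_eq_zero_of_odd {f : (Fin d → ℝ) → ℝ} (hf : ∀ x, f (-x) = -f x) :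
    ∫ x, f x = 0 := by
  have h := integral_neg_eq_self f volume
  simp only [hf, integral_neg] at h
  linarith

lemma conv_self_neg {K : (Fin d → ℝ) → ℝ} (hsym : ∀ x, K (-x) = K x) (x : Fin d → ℝ) :
    ∫ y, K (-x - y) * K y = ∫ y, K (x - y) * K y := by
  rw [← integral_neg_eq_self (fun y => K (-x - y) * K y) volume]
  refine integral_congr_ae (.of_forall fun y => ?_)
  simp only
  rw [hsym y, ← hsym (-x - -y)]
  congr 2
  abel

lemma integrable_convIntegrand {f g : (Fin d → ℝ) → ℝ} (hf : Integrable f) (hg : Integrable g) :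
    Integrable (fun p : (Fin d → ℝ) × (Fin d → ℝ) => f (p.1 - p.2) * g p.2)
      (volume.prod volume) := by
  simpa [mul_comm] using hg.convolution_integrand (ContinuousLinearMap.mul ℝ ℝ) hf

lemma integral_convIntegrand {f g : (Fin d → ℝ) → ℝ} (hf : Integrable f) (hg : Integrable g) :
    ∫ p : (Fin d → ℝ) × (Fin d → ℝ), f (p.1 - p.2) * g p.2 ∂(volume.prod volume)
      = (∫ x, f x) * ∫ x, g x := by
  rw [integral_prod_symm _ (integrable_convIntegrand hf hg)]
  simp only [integral_mul_const, integral_sub_right_eq_self f, integral_const_mul]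

/-- A kernel weighted by `m` is integrable when `‖m x‖ ≤ ‖x‖ ^ k` and the absolute moment of
order `k` is finite; used with `m` a monomial of degree `k`. -/
lemma integrable_monomial_mul {K m : (Fin d → ℝ) → ℝ} (hK0 : ∀ x, 0 ≤ K x) (hK : Integrable K)
    {k : ℕ} (hk : Integrable fun x => ‖x‖ ^ k * K x) (hm : Continuous m)
    (hle : ∀ x, ‖m x‖ ≤ ‖x‖ ^ k) : Integrable fun x => m x * K x := by
  refine hk.mono' (hm.aestronglyMeasurable.mul hK.aestronglyMeasurable) (.of_forall fun x => ?_)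
  rw [norm_mul, Real.norm_of_nonneg (hK0 x)]
  exact mul_le_mul_of_nonneg_right (hle x) (hK0 x)

end

/-- Moments of `K̃ = K*K − 2K` up to order 3: if `K` is a symmetric probability density on `ℝ^d`
with finite absolute moments up to order 3 and `∫ x xᵀ K(x) dx = m₂ I_d`, then
`μ₀(K̃) = −1` and `μ₁(K̃) = μ₂(K̃) = μ₃(K̃) = 0`. -/
theorem moments_conv_sub_two_smul {d : ℕ} (K : (Fin d → ℝ) → ℝ)
    (hK0 : ∀ x, 0 ≤ K x) (hK1 : ∫ x, K x = 1) (hsym : ∀ x, K (-x) = K x)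
    (hmom : ∀ k : ℕ, k ≤ 3 → Integrable fun x => ‖x‖ ^ k * K x)
    (m₂ : ℝ)
    (hm₂ : ∀ i j : Fin d, ∫ x, x i * x j * K x = if i = j then m₂ else 0) :
    (∫ x, ((∫ y, K (x - y) * K y) - 2 * K x) = -1) ∧
    (∀ i : Fin d, ∫ x, x i * ((∫ y, K (x - y) * K y) - 2 * K x) = 0) ∧
    (∀ i j : Fin d, ∫ x, x i * x j * ((∫ y, K (x - y) * K y) - 2 * K x) = 0) ∧
    (∀ i j k : Fin d,
      ∫ x, x i * x j * x k * ((∫ y, K (x - y) * K y) - 2 * K x) = 0) := by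
  have hK : Integrable K := by simpa using hmom 0 (by norm_num)
  refine ⟨?_, fun i => ?_, fun i j => ?_, fun i j k => ?_⟩
  · have hI := integrable_convIntegrand hK hK
    have hE := integral_convIntegrand hK hK
    rw [integral_prod _ hI, hK1] at hE
    rw [integral_sub hI.integral_prod_left (hK.const_mul 2), hE, integral_const_mul, hK1]
    norm_num
  · refine integral_eq_zero_of_odd fun x => ?_
    rw [conv_self_neg hsym, hsym, Pi.neg_apply]
    ring
  · have h1 : ∀ i : Fin d, Integrable fun x => x i * K x := fun i =>
      integrable_monomial_mul hK0 hK (hmom 1 (by norm_num)) (continuous_apply i)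
        fun x => by simpa using norm_le_pi_norm x i
    have h2 : Integrable fun x => x i * x j * K x := by
      refine integrable_monomial_mul hK0 hK (hmom 2 (by norm_num)) (by fun_prop) fun x => ?_
      rw [norm_mul, sq]
      exact mul_le_mul (norm_le_pi_norm x i) (norm_le_pi_norm x j) (norm_nonneg _) (norm_nonneg _)
    have hz : ∀ i : Fin d, ∫ x, x i * K x = 0 := fun i =>
      integral_eq_zero_of_odd fun x => by rw [hsym, Pi.neg_apply, neg_mul]
    -- The four terms of `((x - y) i + y i) * ((x - y) j + y j) * K (x - y) * K y`.
    have hA := integrable_convIntegrand h2 hK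
    have hB := integrable_convIntegrand (h1 i) (h1 j)
    have hC := integrable_convIntegrand (h1 j) (h1 i)
    have hD := integrable_convIntegrand hK h2
    have hexp : (fun p : (Fin d → ℝ) × (Fin d → ℝ) => p.1 i * p.1 j * (K (p.1 - p.2) * K p.2))
        = fun p => (p.1 - p.2) i * (p.1 - p.2) j * K (p.1 - p.2) * K p.2
          + (p.1 - p.2) i * K (p.1 - p.2) * (p.2 j * K p.2)
          + (p.1 - p.2) j * K (p.1 - p.2) * (p.2 i * K p.2)
          + K (p.1 - p.2) * (p.2 i * p.2 j * K p.2) := by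
      funext p
      simp only [Pi.sub_apply]
      ring
    have hI : Integrable (fun p : (Fin d → ℝ) × (Fin d → ℝ) =>
        p.1 i * p.1 j * (K (p.1 - p.2) * K p.2)) (volume.prod volume) := by
      rw [hexp]
      exact ((hA.add hB).add hC).add hD
    have hE : ∫ p : (Fin d → ℝ) × (Fin d → ℝ), p.1 i * p.1 j * (K (p.1 - p.2) * K p.2)
        ∂(volume.prod volume) = 2 * ∫ x, x i * x j * K x := by
      rw [hexp, integral_add (by exact (hA.add hB).add hC) hD,
        integral_add (by exact hA.add hB) hC,
        integral_add hA hB, integral_convIntegrand h2 hK, integral_convIntegrand (h1 i) (h1 j),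
        integral_convIntegrand (h1 j) (h1 i), integral_convIntegrand hK h2, hz, hz, hK1]
      ring
    rw [integral_prod _ hI] at hE
    have hL := hI.integral_prod_left
    simp only [integral_const_mul] at hE hL
    calc ∫ x, x i * x j * ((∫ y, K (x - y) * K y) - 2 * K x)
        = ∫ x, (x i * x j * (∫ y, K (x - y) * K y) - 2 * (x i * x j * K x)) := by
          congr 1
          funext x
          ring
      _ = 0 := by rw [integral_sub hL (h2.const_mul 2), hE, integral_const_mul, sub_self]
  · refine integral_eq_zero_of_odd fun x => ?_
    rw [conv_self_neg hsym, hsym]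
    simp only [Pi.neg_apply]
    ring
end

section
/- Let K : ℝ^d → ℝ be a probability density with K(−x) = K(x) for all x, with finite absolute moments up to order 4, and with ∫_{ℝ^d} x x^⊤ K(x) dx = m₂ I_d for some m₂ ∈ ℝ. Then for all indices i, j, k, l ∈ {1,…,d}, ∫_{ℝ^d} x_i x_j x_k x_l (K*K − 2K)(x) dx = 2 m₂² (δ_{ij}δ_{kl} + δ_{ik}δ_{jl} + δ_{il}δ_{jk}), where δ is the Kronecker delta. (This is the identity μ₄(K̃) = 6 m₂(K)² 𝒮_{d,4}(vec I_d)^{⊗2} in componentwise form.) -/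
/-! The identity is the fourth-moment formula for the sum `U + V` of two independent variables of
density `K`. Writing `x = (x - y) + y` and expanding the monomial `∏ t, x (c t)` over subsets `s` of
the index set, each term of the moment of `K * K` factors, by the integral of a convolution, into a
product of two moments of `K` (`integral_mono_mul_conv`). For degree four, moments of odd degree
vanish by symmetry (`integral_monoMul_of_odd`), the subsets `∅` and `univ` contribute the fourth moment of `K`
twice, which `-2K` cancels, and the six two-element subsets give products of second moments, each pairing occurring twice. -/

open MeasureTheory

/-- The monomial with indices `c t`, `t ∈ s`, times the kernel `K`. -/
def monoMul {d n : ℕ} (K : (Fin d → ℝ) → ℝ) (c : Fin n → Fin d) (s : Finset (Fin n))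
    (x : Fin d → ℝ) : ℝ :=
  (∏ t ∈ s, x (c t)) * K x

lemma integrable_monoMul {d n : ℕ} {K : (Fin d → ℝ) → ℝ}
    (hmom : ∀ k : ℕ, k ≤ n → Integrable fun x => ‖x‖ ^ k * K x)
    (c : Fin n → Fin d) (s : Finset (Fin n)) : Integrable (monoMul K c s) := by
  have hK : Integrable K := by simpa using hmom 0 (Nat.zero_le _)
  refine (hmom s.card (by simpa using s.card_le_univ)).mono ?_ (ae_of_all _ fun x => ?_)
  · refine AEStronglyMeasurable.mul ?_ hK.aestronglyMeasurable
    exact Continuous.aestronglyMeasurable (by fun_prop)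
  · rw [monoMul, norm_mul, norm_mul, norm_prod, norm_pow, norm_norm]
    refine mul_le_mul_of_nonneg_right ?_ (norm_nonneg _)
    rw [← Finset.prod_const]
    exact Finset.prod_le_prod (fun _ _ => norm_nonneg _) fun t _ => norm_le_pi_norm x (c t)

/-- Moments of odd degree of a symmetric function vanish. -/
lemma integral_monoMul_of_odd {d n : ℕ} {K : (Fin d → ℝ) → ℝ} (hsym : ∀ x, K (-x) = K x)
    (c : Fin n → Fin d) (s : Finset (Fin n)) (hs : Odd s.card) :
    ∫ x, monoMul K c s x = 0 := by
  have h := integral_neg_eq_self (monoMul K c s) volume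
  have h' : ∀ x, monoMul K c s (-x) = -monoMul K c s x := fun x => by
    simp [monoMul, hsym, Finset.prod_neg, hs.neg_one_pow]
  simp only [h', integral_neg] at h
  linarith

lemma mono_mul_eq_sum {d n : ℕ} (K : (Fin d → ℝ) → ℝ) (c : Fin n → Fin d) (x y : Fin d → ℝ) :
    (∏ t, x (c t)) * (K (x - y) * K y)
      = ∑ s : Finset (Fin n), monoMul K c s y * monoMul K c sᶜ (x - y) := by
  have h : ∏ t, x (c t) = ∏ t, (y (c t) + (x - y) (c t)) := by simp
  rw [h, Finset.prod_add, Finset.powerset_univ, Finset.sum_mul]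
  refine Finset.sum_congr rfl fun s _ => ?_
  simp only [monoMul, ← Finset.compl_eq_univ_sdiff]
  ring

lemma integrable_conv_term {d n : ℕ} {K : (Fin d → ℝ) → ℝ}
    (hmom : ∀ k : ℕ, k ≤ n → Integrable fun x => ‖x‖ ^ k * K x)
    (c : Fin n → Fin d) (s : Finset (Fin n)) :
    Integrable (fun p : (Fin d → ℝ) × (Fin d → ℝ) =>
      monoMul K c s p.2 * monoMul K c sᶜ (p.1 - p.2)) (volume.prod volume) :=
  Integrable.convolution_integrand (ContinuousLinearMap.mul ℝ ℝ)
    (integrable_monoMul hmom c s) (integrable_monoMul hmom c sᶜ)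

lemma integrable_mono_mul_conv {d n : ℕ} {K : (Fin d → ℝ) → ℝ}
    (hmom : ∀ k : ℕ, k ≤ n → Integrable fun x => ‖x‖ ^ k * K x) (c : Fin n → Fin d) :
    Integrable fun x => (∏ t, x (c t)) * ∫ y, K (x - y) * K y := by
  simp only [← integral_const_mul, mono_mul_eq_sum]
  exact (integrable_finsetSum _ fun s _ => integrable_conv_term hmom c s).integral_prod_left

/-- Binomial formula for the moments of `K * K` in terms of those of `K`. -/
lemma integral_mono_mul_conv {d n : ℕ} {K : (Fin d → ℝ) → ℝ}
    (hmom : ∀ k : ℕ, k ≤ n → Integrable fun x => ‖x‖ ^ k * K x) (c : Fin n → Fin d) :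
    ∫ x, (∏ t, x (c t)) * ∫ y, K (x - y) * K y
      = ∑ s : Finset (Fin n), (∫ x, monoMul K c s x) * ∫ x, monoMul K c sᶜ x := by
  have hexp : ∀ x : Fin d → ℝ, (∏ t, x (c t)) * ∫ y, K (x - y) * K y
      = ∫ y, ∑ s : Finset (Fin n), monoMul K c s y * monoMul K c sᶜ (x - y) := fun x => by
    simp only [← integral_const_mul, mono_mul_eq_sum]
  simp only [hexp]
  have hint := fun s => integrable_conv_term hmom c s
  have h := integral_prod _ (integrable_finsetSum Finset.univ fun s _ => hint s)
  rw [← h, integral_finsetSum _ fun s _ => hint s]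
  refine Finset.sum_congr rfl fun s _ => ?_
  rw [integral_prod _ (hint s)]
  exact integral_convolution (ContinuousLinearMap.mul ℝ ℝ)
    (integrable_monoMul hmom c s) (integrable_monoMul hmom c sᶜ)

/-- A sum over the subsets of `Fin 4` whose odd-sized terms vanish, with complementary pairs grouped. -/
lemma sum_finset_fin_four (f : Finset (Fin 4) → ℝ) (hf : ∀ s, Odd s.card → f s = 0) :
    ∑ s, f s = f ∅ + f Finset.univ + (f {0, 1} + f {2, 3}) + (f {0, 2} + f {1, 3})
      + (f {0, 3} + f {1, 2}) := by
  have hu : (Finset.univ : Finset (Finset (Fin 4))).filter (fun s => ¬ Odd s.card)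
      = {∅, Finset.univ, {0, 1}, {2, 3}, {0, 2}, {1, 3}, {0, 3}, {1, 2}} := by decide
  have h : ∑ s, f s = ∑ s ∈ Finset.univ.filter (fun s : Finset (Fin 4) => ¬ Odd s.card), f s := by
    refine (Finset.sum_subset (Finset.filter_subset _ _) fun s _ hs => hf s ?_).symm
    simpa using hs
  rw [h, hu]
  iterate 7 rw [Finset.sum_insert (by decide)]
  rw [Finset.sum_singleton]
  ring

/-- Fourth moment of `K̃ = K*K − 2K`: if `K` is a symmetric probability density on `ℝ^d` with
finite absolute moments up to order 4 and `∫ x xᵀ K(x) dx = m₂ I_d`, then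
`∫ x_i x_j x_k x_l K̃(x) dx = 2 m₂² (δ_{ij}δ_{kl} + δ_{ik}δ_{jl} + δ_{il}δ_{jk})`.
This is `μ₄(K̃) = 6 m₂(K)² 𝒮_{d,4} (vec I_d)^{⊗2}` in componentwise form. -/
theorem fourth_moment_conv_sub_two_smul {d : ℕ} (K : (Fin d → ℝ) → ℝ)
    (hK0 : ∀ x, 0 ≤ K x) (hK1 : ∫ x, K x = 1) (hsym : ∀ x, K (-x) = K x)
    (hmom : ∀ k : ℕ, k ≤ 4 → Integrable fun x => ‖x‖ ^ k * K x)
    (m₂ : ℝ)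
    (hm₂ : ∀ i j : Fin d, ∫ x, x i * x j * K x = if i = j then m₂ else 0)
    (i j k l : Fin d) :
    ∫ x, x i * x j * x k * x l * ((∫ y, K (x - y) * K y) - 2 * K x)
      = 2 * m₂ ^ 2 *
        ((if i = j then (1 : ℝ) else 0) * (if k = l then (1 : ℝ) else 0)
          + (if i = k then (1 : ℝ) else 0) * (if j = l then (1 : ℝ) else 0)
          + (if i = l then (1 : ℝ) else 0) * (if j = k then (1 : ℝ) else 0)) := by
  have hpair : ∀ (a b : Fin 4) (u v : Fin d), a ≠ b → ![i, j, k, l] a = u →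
      ![i, j, k, l] b = v →
      ∫ x, monoMul K ![i, j, k, l] {a, b} x = m₂ * (if u = v then (1 : ℝ) else 0) := by
    rintro a b u v hab rfl rfl
    simp only [monoMul, Finset.prod_pair hab, hm₂, mul_ite, mul_one, mul_zero]
  have hempty : ∫ x, monoMul K ![i, j, k, l] ∅ x = 1 := by simpa [monoMul] using hK1
  have hprod : ∀ x : Fin d → ℝ, x i * x j * x k * x l = ∏ t, x (![i, j, k, l] t) := fun x => by
    simp [Fin.prod_univ_four]
  have hfull := integrable_monoMul hmom ![i, j, k, l] Finset.univ
  have hsplit : ∀ x : Fin d → ℝ,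
      x i * x j * x k * x l * ((∫ y, K (x - y) * K y) - 2 * K x)
        = (∏ t, x (![i, j, k, l] t)) * (∫ y, K (x - y) * K y)
          - 2 * monoMul K ![i, j, k, l] Finset.univ x := fun x => by
    rw [hprod, monoMul]; ring
  simp only [hsplit]
  rw [integral_sub (integrable_mono_mul_conv hmom _) (hfull.const_mul 2), integral_const_mul,
    integral_mono_mul_conv hmom, sum_finset_fin_four _ fun s hs => by
      rw [integral_monoMul_of_odd hsym _ s hs, zero_mul]]
  have c1 : ({0, 1} : Finset (Fin 4))ᶜ = {2, 3} := by decide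
  have c2 : ({2, 3} : Finset (Fin 4))ᶜ = {0, 1} := by decide
  have c3 : ({0, 2} : Finset (Fin 4))ᶜ = {1, 3} := by decide
  have c4 : ({1, 3} : Finset (Fin 4))ᶜ = {0, 2} := by decide
  have c5 : ({0, 3} : Finset (Fin 4))ᶜ = {1, 2} := by decide
  have c6 : ({1, 2} : Finset (Fin 4))ᶜ = {0, 3} := by decide
  rw [c1, c2, c3, c4, c5, c6, Finset.compl_empty, Finset.compl_univ, hempty,
    hpair 0 1 i j (by decide) rfl rfl, hpair 2 3 k l (by decide) rfl rfl,
    hpair 0 2 i k (by decide) rfl rfl, hpair 1 3 j l (by decide) rfl rfl,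
    hpair 0 3 i l (by decide) rfl rfl, hpair 1 2 j k (by decide) rfl rfl]
  ring
end

section
/- Let k : ℝ → ℝ be differentiable with g = −k′, let x₁, …, xₙ ∈ ℝ^d, let H be a symmetric positive definite d×d matrix, and set q_i(y) = (y−x_i)^⊤ H^{−1} (y−x_i) and f̂_H(y) = n^{−1} (det H)^{−1/2} (1/2) ∑_{i=1}^n k(q_i(y)). If y ∈ ℝ^d satisfies ∑_{i=1}^n g(q_i(y)) > 0, then the gradient of f̂_H vanishes at y if and only if y = (∑_{i=1}^n x_i g(q_i(y))) / (∑_{i=1}^n g(q_i(y))), i.e. if and only if the mean shift m_H(y) = (∑ x_i g(q_i(y)))/(∑ g(q_i(y))) − y is zero. -/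
open MeasureTheory Matrix
open scoped RealInnerProductSpace

/-- The quadratic form `q_i(y) = (y − x_i)ᵀ H⁻¹ (y − x_i)` appearing in the kernel density
estimator with kernel profile `k`, written via the Euclidean inner product. -/
noncomputable def msQuad {d n : ℕ} (H : Matrix (Fin d) (Fin d) ℝ)
    (x : Fin n → EuclideanSpace ℝ (Fin d)) (i : Fin n) (y : EuclideanSpace ℝ (Fin d)) : ℝ :=
  ⟪y - x i, Matrix.toEuclideanLin H⁻¹ (y - x i)⟫

/-! Since `H⁻¹` is symmetric, `∇ q_i(y) = 2 H⁻¹ (y − x_i)`, so by the chain rule the gradient of the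
density estimator is a nonzero multiple of `H⁻¹ (∑ᵢ k′(q_i(y)) (y − x_i))`. As `H⁻¹` is injective, it
vanishes iff `∑ᵢ g(q_i(y)) (y − x_i) = 0`, which is the fixed-point equation after division by
`∑ᵢ g(q_i(y))`. -/

lemma hasGradientAt_msQuad {d n : ℕ} {H : Matrix (Fin d) (Fin d) ℝ} (hH : H.PosDef)
    (x : Fin n → EuclideanSpace ℝ (Fin d)) (i : Fin n) (y : EuclideanSpace ℝ (Fin d)) :
    HasGradientAt (msQuad H x i) ((2 : ℝ) • Matrix.toEuclideanLin H⁻¹ (y - x i)) y := by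
  have hsymm : (Matrix.toEuclideanLin H⁻¹).IsSymmetric :=
    Matrix.isSymmetric_toEuclideanLin_iff.mpr hH.inv.isHermitian
  have h1 : HasFDerivAt (fun z => z - x i) (ContinuousLinearMap.id ℝ _) y :=
    (hasFDerivAt_id y).sub_const (x i)
  have h2 := (LinearMap.toContinuousLinearMap (Matrix.toEuclideanLin H⁻¹)).hasFDerivAt.comp y h1
  rw [hasGradientAt_iff_hasFDerivAt]
  refine (h1.inner ℝ h2).congr_fderiv ?_
  ext v
  have h3 := hsymm (y - x i) v
  simp [fderivInnerCLM_apply, inner_sub_right, real_inner_comm v] at h3 ⊢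
  linarith

lemma toEuclideanLin_inv_eq_zero_iff {d : ℕ} {H : Matrix (Fin d) (Fin d) ℝ} (hH : H.PosDef)
    (v : EuclideanSpace ℝ (Fin d)) : Matrix.toEuclideanLin H⁻¹ v = 0 ↔ v = 0 := by
  refine ⟨fun h => ?_, fun h => by rw [h, map_zero]⟩
  have h1 : H⁻¹ *ᵥ v.ofLp = 0 := congrArg WithLp.ofLp h
  have h2 : v.ofLp = 0 := by
    have := congrArg (H *ᵥ ·) h1
    simpa [Matrix.mulVec_mulVec, Matrix.mul_nonsing_inv H hH.det_pos.ne'.isUnit] using this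
  exact WithLp.ofLp_injective 2 h2

/-- Fixed points of the mean shift: if `∑ᵢ g(q_i(y)) > 0` with `g = −k′`, then the gradient of
the kernel density estimator `f̂_H(y) = n⁻¹ (det H)^{−1/2} (1/2) ∑ᵢ k(q_i(y))` vanishes at `y`
if and only if `y = (∑ᵢ x_i g(q_i(y))) / (∑ᵢ g(q_i(y)))`, i.e. iff the mean shift is zero. -/
theorem gradient_kde_eq_zero_iff_meanShift {d n : ℕ} (k : ℝ → ℝ) (hk : Differentiable ℝ k)
    (x : Fin n → EuclideanSpace ℝ (Fin d))
    (H : Matrix (Fin d) (Fin d) ℝ) (hH : H.PosDef) (y : EuclideanSpace ℝ (Fin d))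
    (hpos : 0 < ∑ i, -(deriv k (msQuad H x i y))) :
    gradient (fun z => (n : ℝ)⁻¹ * H.det ^ (-(1 / 2) : ℝ) *
        (2⁻¹ * ∑ i, k (msQuad H x i z))) y = 0
      ↔ y = (∑ i, -(deriv k (msQuad H x i y)))⁻¹ •
              ∑ i, (-(deriv k (msQuad H x i y))) • x i := by
  -- Positivity of the sum of weights rules out `n = 0`, where `(n : ℝ)⁻¹` would be zero.
  have hn : (n : ℝ) ≠ 0 := by
    rintro h
    obtain rfl : n = 0 := by exact_mod_cast h
    simp at hpos
  have hc : (n : ℝ)⁻¹ * H.det ^ (-(1 / 2) : ℝ) ≠ 0 :=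
    mul_ne_zero (inv_ne_zero hn) (Real.rpow_pos_of_pos hH.det_pos _).ne'
  set c := (n : ℝ)⁻¹ * H.det ^ (-(1 / 2) : ℝ)
  have hgrad : HasGradientAt (fun z => c * (2⁻¹ * ∑ i, k (msQuad H x i z)))
      (c • Matrix.toEuclideanLin H⁻¹ (∑ i, deriv k (msQuad H x i y) • (y - x i))) y := by
    rw [hasGradientAt_iff_hasFDerivAt]
    have hi (i : Fin n) := (hk (msQuad H x i y)).hasDerivAt.comp_hasFDerivAt y
      (hasGradientAt_msQuad hH x i y).hasFDerivAt
    refine (((HasFDerivAt.fun_sum fun i _ => hi i).const_mul 2⁻¹).const_mul c).congr_fderiv ?_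
    simp only [map_smul, map_sum, Finset.smul_sum]
    refine Finset.sum_congr rfl fun i _ => ?_
    ext v
    simp
    left
    ring
  rw [hgrad.gradient, smul_eq_zero_iff_right hc, toEuclideanLin_inv_eq_zero_iff hH,
    eq_inv_smul_iff₀ hpos.ne', Finset.sum_smul, ← sub_eq_zero (b := ∑ i, _ • x i),
    ← Finset.sum_sub_distrib, ← neg_eq_zero, ← Finset.sum_neg_distrib]
  simp only [neg_smul, smul_sub, neg_sub, sub_neg_eq_add, neg_add_eq_sub]
end
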